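/- arXiv:1902.00102 — 3 statements merged into one kernel-verified Lean document; each statement's English description precedes it below -/
import Mathlib

section
/- Let k ≥ 3 and let n₁, …, n_k be elements of a commutative ring. Let C be the k×k 'cycle' matrix with diagonal entries C_{ii} = n_i, entries C_{ij} = −1 whenever the indices i and j are adjacent in the cycle ℤ/kℤ (i.e. j ≡ i ± 1 mod k, including the corner entries C_{1k} = C_{k1} = −1), and all other entries 0. Then det C = n₁ · |n₂, …, n_k| − |n₃, …, n_k| − |n₂, …, n_{k−1}| − 2. -/
/-- The symmetric tridiagonal matrix with diagonal entries given by the list `L`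
and `-1` immediately above and below the diagonal. -/
def triMat {R : Type*} [CommRing R] (L : List R) :
    Matrix (Fin L.length) (Fin L.length) R :=
  Matrix.of fun i j =>
    if (i : ℕ) = (j : ℕ) then L.get i
    else if (i : ℕ) + 1 = (j : ℕ) ∨ (j : ℕ) + 1 = (i : ℕ) then -1 else 0

/-- The tridiagonal determinant `|n₁, …, n_k|`; the determinant of the empty list is `1`. -/
def tridet {R : Type*} [CommRing R] (L : List R) : R := (triMat L).det

/-- The "cycle" matrix with diagonal entries given by the list `L` and entries `-1`
between cyclically adjacent indices (indices adjacent in `ℤ/kℤ`). -/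
def cycMat {R : Type*} [CommRing R] (L : List R) :
    Matrix (Fin L.length) (Fin L.length) R :=
  Matrix.of fun i j =>
    if (i : ℕ) = (j : ℕ) then L.get i
    else if ((i : ℕ) + 1) % L.length = (j : ℕ) ∨ ((j : ℕ) + 1) % L.length = (i : ℕ)
      then -1 else 0


/-- Tridiagonal matrix attached to a function on the naturals. -/
def auxT {R : Type*} [CommRing R] (f : ℕ → R) (m : ℕ) : Matrix (Fin m) (Fin m) R :=
  Matrix.of fun i j =>
    if (i : ℕ) = (j : ℕ) then f i
    else if (i : ℕ) + 1 = (j : ℕ) ∨ (j : ℕ) + 1 = (i : ℕ) then -1 else 0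

/-- Cycle matrix attached to a function on the naturals. -/
def auxC {R : Type*} [CommRing R] (f : ℕ → R) (m : ℕ) : Matrix (Fin m) (Fin m) R :=
  Matrix.of fun i j =>
    if (i : ℕ) = (j : ℕ) then f i
    else if (i : ℕ) + 1 = (j : ℕ) ∨ (j : ℕ) + 1 = (i : ℕ) ∨
      ((i : ℕ) = 0 ∧ (j : ℕ) + 1 = m) ∨ ((j : ℕ) = 0 ∧ (i : ℕ) + 1 = m) then -1 else 0

theorem aux_sum {R : Type*} [CommRing R] (m : ℕ) (g : Fin (m + 2) → R)
    (h : ∀ i : Fin m, g i.castSucc.succ = 0) : ∑ i, g i = g 0 + g (Fin.last (m + 1)) := by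
  rw [Fin.sum_univ_succ, Fin.sum_univ_castSucc, Finset.sum_eq_zero (fun i _ => h i), zero_add]
  rfl

theorem aux_minor1 {R : Type*} [CommRing R] (f : ℕ → R) (m : ℕ) :
    ((auxC f (m + 3)).submatrix Fin.succ (Fin.succAbove 1)).det
      = -(auxT (fun i => f (i + 2)) (m + 1)).det - 1 := by
  rw [Matrix.det_succ_column_zero, aux_sum]
  · have h1 : (((auxC f (m + 3)).submatrix Fin.succ (Fin.succAbove 1)).submatrix
        (Fin.succAbove 0) Fin.succ) = auxT (fun i => f (i + 2)) (m + 1) := by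
      ext i j
      simp [auxC, auxT, Fin.succAbove, Fin.lt_def]
    have h2 : (((auxC f (m + 3)).submatrix Fin.succ (Fin.succAbove 1)).submatrix
        (Fin.succAbove (Fin.last (m + 1))) Fin.succ).det = (-1) ^ (m + 1) := by
      rw [Matrix.det_of_lowerTriangular]
      · simp [auxC, Fin.succAbove, Fin.lt_def]
      · intro i j hij
        have hij : (i : ℕ) < j := by simpa using hij
        have := j.2
        have him : (i : ℕ) ≤ m := by have := i.2; omega
        simp only [auxC, Fin.succAbove, Fin.lt_def, Matrix.submatrix_apply, Matrix.of_apply]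
        simp [him]
        rw [if_neg (by omega), if_neg (by omega)]
    rw [h1, h2]
    have e : ((-1 : R) ^ (m + 1)) * (-1) ^ (m + 1) = 1 := by
      rw [← mul_pow]; simp
    simp [auxC, Fin.succAbove, Fin.lt_def]
    linear_combination -e
  · intro i
    have := i.2
    have : (auxC f (m + 3)).submatrix Fin.succ (Fin.succAbove 1) i.castSucc.succ 0 = 0 := by
      simp [auxC, Fin.succAbove, Fin.lt_def]
      omega
    rw [this]; simp

theorem aux_minor2 {R : Type*} [CommRing R] (f : ℕ → R) (m : ℕ) :
    ((auxC f (m + 3)).submatrix Fin.succ (Fin.succAbove (Fin.last (m + 2)))).det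
      = (-1) ^ (m + 2) * (1 + (auxT (fun i => f (i + 1)) (m + 1)).det) := by
  rw [Matrix.det_succ_column_zero, aux_sum]
  · have h1 : (((auxC f (m + 3)).submatrix Fin.succ (Fin.succAbove (Fin.last (m + 2)))).submatrix
        (Fin.succAbove (Fin.last (m + 1))) Fin.succ) = auxT (fun i => f (i + 1)) (m + 1) := by
      ext i j
      simp [auxC, auxT]
    have h2 : (((auxC f (m + 3)).submatrix Fin.succ (Fin.succAbove (Fin.last (m + 2)))).submatrix
        (Fin.succAbove 0) Fin.succ).det = (-1) ^ (m + 1) := by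
      rw [Matrix.det_of_upperTriangular]
      · simp [auxC]
      · intro i j hij
        have hij : (j : ℕ) < i := hij
        have := i.2
        simp [auxC]
        rw [if_neg (by omega), if_neg (by omega)]
    rw [h1, h2]
    simp [auxC]
    ring
  · intro i
    have := i.2
    have : (auxC f (m + 3)).submatrix Fin.succ (Fin.succAbove (Fin.last (m + 2)))
        i.castSucc.succ 0 = 0 := by
      simp [auxC]
      omega
    rw [this]; simp

theorem aux_main {R : Type*} [CommRing R] (f : ℕ → R) (m : ℕ) :
    (auxC f (m + 3)).det = f 0 * (auxT (fun i => f (i + 1)) (m + 2)).det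
      - (auxT (fun i => f (i + 2)) (m + 1)).det
      - (auxT (fun i => f (i + 1)) (m + 1)).det - 2 := by
  rw [Matrix.det_succ_row_zero, Fin.sum_univ_succ, aux_sum]
  · have h0 : (auxC f (m + 3)).submatrix Fin.succ (Fin.succAbove 0)
        = auxT (fun i => f (i + 1)) (m + 2) := by
      ext i j
      simp [auxC, auxT]
    rw [h0, Fin.succ_last, Fin.succ_zero_eq_one, aux_minor1, aux_minor2]
    have e : ((-1 : R) ^ (m + 2)) * (-1) ^ (m + 2) = 1 := by
      rw [← mul_pow]; simp
    simp [auxC]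
    linear_combination (-1 - (auxT (fun i => f (i + 1)) (m + 1)).det) * e
  · intro i
    have := i.2
    have : auxC f (m + 3) 0 i.castSucc.succ.succ = 0 := by
      simp [auxC]
      omega
    rw [this]; simp

theorem aux_tridet {R : Type*} [CommRing R] (l : List R) (f : ℕ → R) (m : ℕ)
    (hm : l.length = m) (h : ∀ i (hi : i < l.length), l[i] = f i) :
    tridet l = (auxT f m).det := by
  subst hm
  unfold tridet
  congr 1
  ext i j
  simp [triMat, auxT, h]

theorem aux_cyc {R : Type*} [CommRing R] (l : List R) (f : ℕ → R) (m : ℕ)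
    (hm : l.length = m) (h : ∀ i (hi : i < l.length), l[i] = f i) :
    (cycMat l).det = (auxC f m).det := by
  subst hm
  congr 1
  ext i j
  have key : ∀ a b : Fin l.length, (((a : ℕ) + 1) % l.length = b ↔
      (a : ℕ) + 1 = b ∨ ((b : ℕ) = 0 ∧ (a : ℕ) + 1 = l.length)) := by
    intro a b
    have ha := a.2
    have hb := b.2
    rcases Nat.lt_or_ge ((a : ℕ) + 1) l.length with h | h
    · rw [Nat.mod_eq_of_lt h]; omega
    · have : (a : ℕ) + 1 = l.length := by omega
      rw [this, Nat.mod_self]; omega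
  simp only [cycMat, auxC, Matrix.of_apply, key, List.get_eq_getElem, h]
  congr 1
  refine if_congr ?_ rfl rfl
  tauto

/-- Determinant of a cycle:
`|n₁, …, n_k, ⟲| = n₁ · |n₂, …, n_k| − |n₃, …, n_k| − |n₂, …, n_{k−1}| − 2` for `k ≥ 3`. -/
theorem det_cycle {R : Type*} [CommRing R] (n₁ : R) (l : List R) (hl : 2 ≤ l.length) :
    (cycMat (n₁ :: l)).det
      = n₁ * tridet l - tridet l.tail - tridet l.dropLast - 2 := by
  obtain ⟨m, hm⟩ := Nat.exists_eq_add_of_le hl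
  have hm : l.length = m + 2 := by omega
  let f : ℕ → R := fun i => (n₁ :: l).getD i 0
  rw [aux_cyc (n₁ :: l) f (m + 3) (by simp [hm]) (by intro i hi; simp only [f]; rw [List.getD_eq_getElem _ _ hi]),
    aux_tridet l (fun i => f (i + 1)) (m + 2) hm (by intro i hi; simp [f, hi]),
    aux_tridet l.tail (fun i => f (i + 2)) (m + 1) (by simp [hm])
      (by intro i hi; simp at hi; simp [f, show i + 1 < l.length by omega]),
    aux_tridet l.dropLast (fun i => f (i + 1)) (m + 1) (by simp [hm])
      (by intro i hi; simp at hi; simp [f, show i < l.length by omega]),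
    aux_main]
  rfl
end

section
/- Let R be a commutative ring, let A be a square matrix over R indexed by a finite type V, let v ∈ V, and let m ≥ 1 be an integer. Let B be the matrix indexed by Fin(m−1) ⊕ V obtained by attaching a chain of (m−1) vertices marked 2 to the vertex v: B has diagonal entries 2 on the Fin(m−1) part, entries −1 between consecutive chain vertices, entries −1 (in both symmetric positions) between the last chain vertex and v, and agrees with A on the V×V block, with all other entries 0. Let A′ be the matrix indexed by Unit ⊕ V whose new vertex has diagonal entry −m, with entries −1 (in both symmetric positions) between the new vertex and v, whose (v,v) entry equals A(v,v) − 1, and which otherwise agrees with A. Then det B = m · det A − (m−1) · det(A with row and column v deleted), and det B = −det A′. -/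
/-- The matrix obtained from `A` by attaching a chain of `m - 1` vertices marked `2`
to the vertex `v`: the chain vertices have diagonal entries `2`, consecutive chain
vertices are joined by `-1`, and the last chain vertex (index `m - 2`) is joined
to `v` by `-1`. -/
def attachTwos {R : Type*} [CommRing R] {V : Type*} [DecidableEq V]
    (A : Matrix V V R) (v : V) (m : ℕ) :
    Matrix (Fin (m - 1) ⊕ V) (Fin (m - 1) ⊕ V) R :=
  Matrix.of fun x y =>
    match x, y with
    | .inl i, .inl j =>
        if (i : ℕ) = (j : ℕ) then 2
        else if (i : ℕ) + 1 = (j : ℕ) ∨ (j : ℕ) + 1 = (i : ℕ) then -1 else 0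
    | .inl i, .inr w => if (i : ℕ) + 2 = m ∧ w = v then -1 else 0
    | .inr w, .inl j => if (j : ℕ) + 2 = m ∧ w = v then -1 else 0
    | .inr w, .inr w' => A w w'

/-- The matrix obtained from `A` by adding one new vertex with mark `-m` joined to `v`
by `-1`, and decreasing the mark of `v` by `1`. -/
def addNegVertex {R : Type*} [CommRing R] {V : Type*} [DecidableEq V]
    (A : Matrix V V R) (v : V) (m : ℕ) :
    Matrix (Unit ⊕ V) (Unit ⊕ V) R :=
  Matrix.of fun x y =>
    match x, y with
    | .inl _, .inl _ => -(m : R)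
    | .inl _, .inr w => if w = v then -1 else 0
    | .inr w, .inl _ => if w = v then -1 else 0
    | .inr w, .inr w' => if w = v ∧ w' = v then A v v - 1 else A w w'

/-- bordered matrix with corner `c` joined to `v` by `-1`. -/
def borderMat {R : Type*} [CommRing R] {V : Type*} [DecidableEq V]
    (A : Matrix V V R) (v : V) (c : R) : Matrix (Unit ⊕ V) (Unit ⊕ V) R :=
  Matrix.fromBlocks (Matrix.of fun _ _ => c) (Matrix.of fun _ w => if w = v then -1 else 0)
    (Matrix.of fun w _ => if w = v then -1 else 0) A

/-- principal minor deleting `v`. -/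
def delMat {R : Type*} {V : Type*} (A : Matrix V V R) (v : V) :
    Matrix {w : V // w ≠ v} {w : V // w ≠ v} R :=
  A.submatrix (fun i : {w : V // w ≠ v} => (i : V)) (fun i : {w : V // w ≠ v} => (i : V))

theorem det_updateRow_single_aux {R : Type*} [CommRing R] {V : Type*} [Fintype V] [DecidableEq V]
    (A : Matrix V V R) (v : V) :
    (A.updateRow v (Pi.single v 1)).det = (delMat A v).det := by
  rw [Matrix.twoBlockTriangular_det' _ (fun w => w = v)]
  · have key : ∀ {x y z : R}, x = 1 → y = z → x * y = z := by
      rintro x y z rfl rfl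
      exact one_mul _
    refine key ?_ ?_
    · have h1 : Matrix.toSquareBlockProp (A.updateRow v (Pi.single v 1)) (fun w => w = v)
          = 1 := by
        ext ⟨i, hi⟩ ⟨j, hj⟩
        subst hi
        subst hj
        simp [Matrix.toSquareBlockProp]
      rw [h1]
      exact @Matrix.det_one _ _ (_) _ _
    have h2 : Matrix.toSquareBlockProp (A.updateRow v (Pi.single v 1)) (fun w => ¬ w = v)
        = delMat A v := by
      ext i j
      have := i.2
      simp [Matrix.toSquareBlockProp, delMat, Matrix.updateRow_apply, this]
    rw [← h2]
  · intro i hi j hj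
    subst hi
    simp [Pi.single_apply, hj]

theorem det_sub_single_aux {R : Type*} [CommRing R] {V : Type*} [Fintype V] [DecidableEq V]
    (A : Matrix V V R) (v : V) :
    (A - Matrix.single v v 1).det = A.det - (delMat A v).det := by
  have h : A - Matrix.single v v 1
      = A.updateRow v (A v + (-1 : R) • (Pi.single v 1 : V → R)) := by
    ext i j
    by_cases hi : i = v
    · subst hi
      simp [Matrix.single_apply, Pi.single_apply, sub_eq_add_neg, eq_comm]
    · simp [Matrix.single_apply, Matrix.updateRow_apply, hi, Ne.symm hi]
  rw [h, Matrix.det_updateRow_add, Matrix.det_updateRow_smul, det_updateRow_single_aux,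
    Matrix.updateRow_eq_self]
  ring

theorem det_borderMat {R : Type*} [CommRing R] {V : Type*} [Fintype V] [DecidableEq V]
    (A : Matrix V V R) (v : V) (c : R) :
    (borderMat A v c).det = c * A.det - (delMat A v).det := by
  have h1 : (borderMat A v 1).det = A.det - (delMat A v).det := by
    have e : (Matrix.of fun _ _ => 1 : Matrix Unit Unit R) = 1 := by
      ext i j; simp
    rw [borderMat, e, Matrix.det_fromBlocks_one₁₁, ← det_sub_single_aux]
    congr 2
    ext i j
    simp only [Matrix.mul_apply, Matrix.of_apply, Matrix.single_apply]
    by_cases hi : i = v <;> by_cases hj : j = v <;> simp [hi, hj, eq_comm]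
    all_goals grind
  have h2 : borderMat A v c = (borderMat A v 1).updateRow (Sum.inl ())
      ((borderMat A v 1) (Sum.inl ()) + (c - 1) • (Pi.single (Sum.inl ()) 1)) := by
    ext i j
    rcases i with i | i <;> rcases j with j | j <;>
      simp [borderMat, Matrix.updateRow_apply]
  have h3 : (borderMat A v 1).updateRow (Sum.inl ()) (Pi.single (Sum.inl ()) 1)
      = Matrix.fromBlocks 1 0 (Matrix.of fun w _ => if w = v then -1 else 0) A := by
    ext i j
    rcases i with i | i <;> rcases j with j | j <;>
      simp [borderMat, Matrix.updateRow_apply]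
  rw [h2, Matrix.det_updateRow_add, Matrix.det_updateRow_smul, Matrix.updateRow_eq_self, h1, h3,
    Matrix.det_fromBlocks_zero₁₂, Matrix.det_one]
  ring

theorem det_delMat_borderMat {R : Type*} [CommRing R] {V : Type*} [Fintype V] [DecidableEq V]
    (A : Matrix V V R) (v : V) (c : R) :
    (delMat (borderMat A v c) (Sum.inl ())).det = A.det := by
  let e : V ≃ {w : Unit ⊕ V // w ≠ Sum.inl ()} :=
    { toFun := fun w => ⟨Sum.inr w, by simp⟩
      invFun := fun x => match x with
        | ⟨Sum.inr w, _⟩ => w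
        | ⟨Sum.inl (), h⟩ => absurd rfl h
      left_inv := fun w => rfl
      right_inv := by rintro ⟨⟨⟩ | w, h⟩ <;> [exact absurd rfl h; rfl] }
  rw [← Matrix.det_submatrix_equiv_self e]
  rfl

/-- moving the last chain vertex. -/
def chainEquiv (n : ℕ) (V : Type*) : Fin n ⊕ (Unit ⊕ V) ≃ Fin (n + 1) ⊕ V :=
  (Equiv.sumAssoc _ _ _).symm.trans
    (Equiv.sumCongr (((Equiv.refl _).sumCongr (Equiv.ofUnique Unit (Fin 1))).trans
      finSumFinEquiv) (Equiv.refl V))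

theorem attachTwos_succ_aux {R : Type*} [CommRing R] {V : Type*} [DecidableEq V]
    (A : Matrix V V R) (v : V) (n : ℕ) :
    (attachTwos A v (n + 2)).submatrix (chainEquiv n V) (chainEquiv n V)
      = attachTwos (borderMat A v 2) (Sum.inl ()) (n + 1) := by
  ext i j
  rcases i with i | i | i <;> rcases j with j | j | j <;>
    simp [attachTwos, borderMat, chainEquiv, Fin.ext_iff]
  all_goals grind

theorem det_attachTwos_aux {R : Type*} [CommRing R] (n : ℕ) :
    ∀ {V : Type*} [Fintype V] [DecidableEq V] (A : Matrix V V R) (v : V),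
    (attachTwos A v (n + 1)).det = ((n : R) + 1) * A.det - (n : R) * (delMat A v).det := by
  induction n with
  | zero =>
    intro V _ _ A v
    have : (attachTwos A v (0 + 1)).submatrix (Equiv.emptySum (Fin 0) V).symm
        (Equiv.emptySum (Fin 0) V).symm = A := by
      ext i j; rfl
    have h := Matrix.det_submatrix_equiv_self (Equiv.emptySum (Fin 0) V).symm
      (attachTwos A v (0 + 1))
    rw [this] at h
    simpa using h.symm
  | succ n ih =>
    intro V _ _ A v
    have h := Matrix.det_submatrix_equiv_self (chainEquiv n V) (attachTwos A v (n + 2))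
    rw [attachTwos_succ_aux, ih, det_borderMat, det_delMat_borderMat] at h
    refine h.symm.trans ?_
    push_cast
    ring

theorem det_addNegVertex_aux {R : Type*} [CommRing R] {V : Type*} [Fintype V] [DecidableEq V]
    (A : Matrix V V R) (v : V) (m : ℕ) :
    (addNegVertex A v m).det = -((m : R) * A.det - ((m : R) - 1) * (delMat A v).det) := by
  have h : addNegVertex A v m = borderMat (A - Matrix.single v v 1) v (-(m : R)) := by
    ext i j
    rcases i with i | i <;> rcases j with j | j <;>
      simp [addNegVertex, borderMat, Matrix.single_apply]
    all_goals grind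
  have h2 : delMat (A - Matrix.single v v 1) v = delMat A v := by
    ext i j
    have := i.2
    simp [delMat, Matrix.single_apply, Ne.symm this]
  rw [h, det_borderMat, h2, det_sub_single_aux]
  ring

/-- Attaching a chain `[2, …, 2]` of `m − 1` twos to the vertex `v` of a marked graph:
`det B = m · det A − (m − 1) · det (A ∖ v)`, and `det B = − det A′` where `A′` is obtained
by adding a single vertex marked `−m` and replacing the mark `n` of `v` by `n − 1`. -/
theorem det_attach_twos {R : Type*} [CommRing R] {V : Type*} [Fintype V] [DecidableEq V]
    (A : Matrix V V R) (v : V) (m : ℕ) (hm : 1 ≤ m) :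
    (attachTwos A v m).det
        = (m : R) * A.det
          - ((m : R) - 1) *
            (A.submatrix (fun i : {w : V // w ≠ v} => (i : V))
              (fun i : {w : V // w ≠ v} => (i : V))).det
      ∧ (attachTwos A v m).det = -(addNegVertex A v m).det := by
  have h1 : (attachTwos A v m).det
      = (m : R) * A.det - ((m : R) - 1) * (delMat A v).det := by
    obtain ⟨n, rfl⟩ : ∃ n, m = n + 1 := ⟨m - 1, by omega⟩
    rw [det_attachTwos_aux]
    push_cast
    ring
  refine ⟨h1, ?_⟩
  rw [h1, det_addNegVertex_aux, neg_neg]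
end

section
/- Let R be a commutative ring, let A be a square matrix over R indexed by a finite type V, let v ∈ V, and let c = [c₁, …, c_k] and c′ = [c′₁, …, c′_l] (k, l ≥ 1) be two lists of elements of R. Let G be the matrix indexed by Fin(k−1) ⊕ V ⊕ Fin(l−1) obtained by grafting both chains c and c′ onto the same vertex v: G agrees with A on the V×V block except that G(v,v) = A(v,v) + c₁ + c′₁; the vertices of the first added chain carry diagonal entries c₂, …, c_k and those of the second carry c′₂, …, c′_l; there are entries −1 (in both symmetric positions) between v and the vertex carrying c₂, between v and the vertex carrying c′₂, and between consecutive vertices within each added chain; all other entries are 0. Then det G = |c₂,…,c_k| · |c′₂,…,c′_l| · det A + ( |c₁,…,c_k| · |c′₂,…,c′_l| + |c′₁,…,c′_l| · |c₂,…,c_k| ) · det(A with row and column v deleted). -/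
/-- The matrix obtained from `A` by grafting the two chains `c₁ :: rest` and
`c₁' :: rest'` onto the same vertex `v`: the diagonal entry at `v` becomes
`A v v + c₁ + c₁'`, the added vertices of the two chains carry the diagonal entries
from `rest` and `rest'` respectively, `v` is joined by `-1` to the first vertex of
each chain, consecutive vertices within each chain are joined by `-1`, and all other
new entries (in particular between the two chains) vanish. -/
def graftTwoChains {R : Type*} [CommRing R] {V : Type*} [DecidableEq V]
    (A : Matrix V V R) (v : V) (c₁ : R) (rest : List R) (c₁' : R) (rest' : List R) :
    Matrix (Fin rest.length ⊕ V ⊕ Fin rest'.length)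
      (Fin rest.length ⊕ V ⊕ Fin rest'.length) R :=
  Matrix.of fun x y =>
    match x, y with
    | .inl i, .inl j =>
        if (i : ℕ) = (j : ℕ) then rest.get i
        else if (i : ℕ) + 1 = (j : ℕ) ∨ (j : ℕ) + 1 = (i : ℕ) then -1 else 0
    | .inl i, .inr (.inl w) => if w = v ∧ (i : ℕ) = 0 then -1 else 0
    | .inr (.inl w), .inl i => if w = v ∧ (i : ℕ) = 0 then -1 else 0
    | .inr (.inl w), .inr (.inl w') =>
        if w = v ∧ w' = v then A v v + c₁ + c₁' else A w w'
    | .inr (.inl w), .inr (.inr j) => if w = v ∧ (j : ℕ) = 0 then -1 else 0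
    | .inr (.inr i), .inr (.inl w) => if w = v ∧ (i : ℕ) = 0 then -1 else 0
    | .inr (.inr i), .inr (.inr j) =>
        if (i : ℕ) = (j : ℕ) then rest'.get i
        else if (i : ℕ) + 1 = (j : ℕ) ∨ (j : ℕ) + 1 = (i : ℕ) then -1 else 0
    | .inl _, .inr (.inr _) => 0
    | .inr (.inr _), .inl _ => 0

open Matrix in
/-- Determinant of two matrices joined by a single `-1` edge. -/
theorem det_glue {R : Type*} [CommRing R] {m n : Type*} [Fintype m] [DecidableEq m]
    [Fintype n] [DecidableEq n] (M : Matrix m m R) (N : Matrix n n R) (u : m) (w : n)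
    (C : Matrix m n R) (D : Matrix n m R)
    (hC : ∀ i j, C i j = if i = u ∧ j = w then -1 else 0)
    (hD : ∀ j i, D j i = if i = u ∧ j = w then -1 else 0) :
    (fromBlocks M C D N).det
      = M.det * N.det - M.adjugate u u * N.adjugate w w := by
  have h0 : fromBlocks M C D N = (fromBlocks M C D N).updateRow (Sum.inl u)
      (Sum.elim (M u) 0 + Sum.elim (0 : m → R) (-Pi.single w 1)) := by
    ext (i | i) (j | j) <;> simp [updateRow_apply, Pi.single_apply, hC]
    · rintro rfl; rfl
    · split_ifs <;> simp_all
  have h1 : (fromBlocks M C D N).updateRow (Sum.inl u) (Sum.elim (M u) 0)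
      = fromBlocks M 0 D N := by
    ext (i | i) (j | j) <;> simp [updateRow_apply, hC]
    · rintro rfl; rfl
    · tauto
  have h2 : ((fromBlocks M C D N).updateRow (Sum.inl u) (Sum.elim 0 (-Pi.single w 1))).submatrix
        (Equiv.swap (Sum.inl u) (Sum.inr w)) id
      = fromBlocks (M.updateRow u (-Pi.single u 1)) (Matrix.of fun i j => if i = u then N w j else 0)
          0 (N.updateRow w (-Pi.single w 1)) := by
    ext (i | i) j
    · by_cases hi : i = u
      · subst hi
        rcases j with j | j <;> simp [updateRow_apply, hD, Pi.single_apply]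
        split_ifs <;> simp
      · have : Equiv.swap (Sum.inl u) (Sum.inr w) (Sum.inl i : m ⊕ n) = Sum.inl i :=
          Equiv.swap_apply_of_ne_of_ne (by simpa using hi) (by simp)
        rcases j with j | j <;> simp [updateRow_apply, hC, this, hi]
    · by_cases hi : i = w
      · subst hi
        rcases j with j | j <;> simp [updateRow_apply]
      · have : Equiv.swap (Sum.inl u) (Sum.inr w) (Sum.inr i : m ⊕ n) = Sum.inr i :=
          Equiv.swap_apply_of_ne_of_ne (by simp) (by simpa using hi)
        rcases j with j | j <;> simp [updateRow_apply, hD, this, hi]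
  have h3 := congrArg Matrix.det h2
  have hneg : ∀ {k : Type _} [Fintype k] [DecidableEq k] (K : Matrix k k R) (x : k),
      (K.updateRow x (-Pi.single x 1)).det = - K.adjugate x x := by
    intro k _ _ K x
    rw [adjugate_apply, ← neg_one_smul R (Pi.single x (1 : R) : k → R), det_updateRow_smul]
    simp
  have hneg' : ∀ {k : Type _} [Fintype k] [DecidableEq k] (K : Matrix k k R) (x : k),
      (K.updateRow x (-Pi.single x 1)).det = - K.adjugate x x := by
    intro k _ _ K x
    rw [adjugate_apply, ← neg_one_smul R (Pi.single x (1 : R) : k → R), det_updateRow_smul]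
    simp
  rw [det_fromBlocks_zero₂₁, hneg, hneg', det_permute, Equiv.Perm.sign_swap (by simp)] at h3
  rw [h0, det_updateRow_add, h1, det_fromBlocks_zero₁₂]
  simp at h3
  linear_combination -h3

theorem adj_minor {R : Type*} [CommRing R] {V : Type*} [Fintype V] [DecidableEq V]
    (A : Matrix V V R) (v : V) :
    A.adjugate v v = (A.submatrix (fun i : {w : V // w ≠ v} => (i : V))
            (fun i : {w : V // w ≠ v} => (i : V))).det := by
  rw [Matrix.adjugate_apply, Matrix.twoBlockTriangular_det' _ (fun w => w = v)]
  · refine Eq.trans (b := 1 * _) ?_ (one_mul _)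
    congr 1
    · refine (@Matrix.det_eq_elem_of_subsingleton _ (_) (_) _ _ _ _ ⟨v, rfl⟩).trans ?_
      simp [Matrix.toSquareBlockProp, Matrix.updateRow_apply]
    · congr 1
      ext i j
      simp [Matrix.toSquareBlockProp, Matrix.updateRow_apply, i.2]
  · rintro i rfl j hj
    simp [hj]

theorem adj_tri {R : Type*} [CommRing R] (a : R) (r : List R) :
    (triMat (a :: r)).adjugate ⟨0, by simp⟩ ⟨0, by simp⟩ = tridet r := by
  have := Matrix.adjugate_fin_succ_eq_det_submatrix (n := r.length) (triMat (a :: r)) 0 0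
  refine this.trans ?_
  simp only [tridet]
  simp
  congr 1
  ext i j
  simp [triMat]

theorem tridet_single {R : Type*} [CommRing R] (c : R) : tridet [c] = c := by
  refine (Matrix.det_fin_one (triMat [c])).trans ?_
  simp [triMat]

theorem tridet_nil {R : Type*} [CommRing R] : tridet ([] : List R) = 1 := 
  Matrix.det_fin_zero (A := triMat ([] : List R))

theorem tridet_cons {R : Type*} [CommRing R] (c a : R) (r : List R) :
    tridet (c :: a :: r) = c * tridet (a :: r) - tridet r := by
  let e : Fin 1 ⊕ Fin (a :: r).length ≃ Fin (c :: a :: r).length :=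
    finSumFinEquiv.trans (finCongr (by simp; omega))
  have h : (triMat (c :: a :: r)).submatrix e e = Matrix.fromBlocks (triMat [c])
      (Matrix.of fun i j => if i = 0 ∧ j = ⟨0, by simp⟩ then -1 else 0)
      (Matrix.of fun j i => if i = 0 ∧ j = ⟨0, by simp⟩ then -1 else 0) (triMat (a :: r)) := by
    ext (i | i) (j | j)
    · have hi : i = 0 := Subsingleton.elim _ _
      have hj : j = 0 := Subsingleton.elim _ _
      subst hi hj
      simp [triMat, e]
    · have hi : i = 0 := Subsingleton.elim _ _
      subst hi
      simp [triMat, e, Fin.ext_iff, -Fin.val_eq_zero_iff]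
    · have hi : j = 0 := Subsingleton.elim _ _
      subst hi
      simp [triMat, e, Fin.ext_iff, -Fin.val_eq_zero_iff]
    · simp [triMat, e, Fin.ext_iff, -Fin.val_eq_zero_iff]
  have h2 := congrArg Matrix.det h
  rw [Matrix.det_submatrix_equiv_self, det_glue (u := (0 : Fin 1)) (w := ⟨0, by simp⟩)
    (hC := by intro i j; simp only [Matrix.of_apply]) (hD := by intro i j; simp only [Matrix.of_apply]), adj_tri] at h2
  have h3 : (triMat [c]).adjugate 0 0 = 1 := (adj_tri c []).trans tridet_nil
  have h4 : (triMat [c]).det = c := tridet_single c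
  refine h2.trans ?_
  erw [h3, h4]
  simp [tridet]

/-- The two-hair case of the hairy-graph determinant theorem:
`det G = |c₂,…,c_k|·|c′₂,…,c′_l|·det A
  + (|c₁,…,c_k|·|c′₂,…,c′_l| + |c′₁,…,c′_l|·|c₂,…,c_k|)·det (A ∖ v)`. -/
theorem det_graft_two_chains {R : Type*} [CommRing R] {V : Type*}
    [Fintype V] [DecidableEq V]
    (A : Matrix V V R) (v : V) (c₁ : R) (rest : List R) (c₁' : R) (rest' : List R) :
    (graftTwoChains A v c₁ rest c₁' rest').det
      = tridet rest * tridet rest' * A.det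
        + (tridet (c₁ :: rest) * tridet rest' + tridet (c₁' :: rest') * tridet rest) *
          (A.submatrix (fun i : {w : V // w ≠ v} => (i : V))
            (fun i : {w : V // w ≠ v} => (i : V))).det := by
  set A' : Matrix V V R := A.updateRow v (A v + (c₁ + c₁') • Pi.single v 1) with hA'
  have hdA' : A'.det = A.det + (c₁ + c₁') * A.adjugate v v := by
    rw [hA', Matrix.det_updateRow_add, Matrix.det_updateRow_smul, Matrix.adjugate_apply,
      Matrix.updateRow_eq_self]
  have haA' : A'.adjugate v v = A.adjugate v v := by
    rw [hA', Matrix.adjugate_apply, Matrix.adjugate_apply, Matrix.updateRow_idem]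
  set C' : Matrix V (Fin rest'.length) R :=
    Matrix.of fun w j => if w = v ∧ (j : ℕ) = 0 then -1 else 0 with hC'
  set D' : Matrix (Fin rest'.length) V R :=
    Matrix.of fun j w => if w = v ∧ (j : ℕ) = 0 then -1 else 0 with hD'
  set B := Matrix.fromBlocks A' C' D' (triMat rest') with hB
  set C : Matrix (Fin rest.length) (V ⊕ Fin rest'.length) R :=
    Matrix.of fun i x => if x = Sum.inl v ∧ (i : ℕ) = 0 then -1 else 0 with hC
  set D : Matrix (V ⊕ Fin rest'.length) (Fin rest.length) R :=
    Matrix.of fun x i => if x = Sum.inl v ∧ (i : ℕ) = 0 then -1 else 0 with hD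
  have hG : graftTwoChains A v c₁ rest c₁' rest' = Matrix.fromBlocks (triMat rest) C D B := by
    ext (i | i | i) (j | j | j) <;>
      simp [graftTwoChains, hB, hC, hD, hC', hD', hA', triMat, Matrix.updateRow_apply,
        Pi.single_apply]
    by_cases hi : i = v
    · by_cases hj : j = v
      · simp [hi, hj, add_assoc]
      · simp [hi, hj]
    · simp [hi]
  have hBadj : B.adjugate (Sum.inl v) (Sum.inl v) = A.adjugate v v * tridet rest' := by
    have : B.updateRow (Sum.inl v) (Pi.single (Sum.inl v) 1)
        = Matrix.fromBlocks (A'.updateRow v (Pi.single v 1)) 0 D' (triMat rest') := by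
      ext (i | i) (j | j) <;>
        simp [hB, hC', Matrix.updateRow_apply, Pi.single_apply]
      grind
    rw [Matrix.adjugate_apply, this, Matrix.det_fromBlocks_zero₁₂, ← haA',
      Matrix.adjugate_apply, tridet]
  have hBdet : B.det = tridet rest' * A.det
      + (c₁ * tridet rest' + tridet (c₁' :: rest')) * A.adjugate v v := by
    rcases rest' with _ | ⟨a, r⟩
    · have : IsEmpty (Fin ([] : List R).length) := inferInstanceAs (IsEmpty (Fin 0))
      have hz : C' = 0 := by ext i j; exact isEmptyElim j
      rw [hB, hz, Matrix.det_fromBlocks_zero₁₂, hdA', tridet_single, tridet_nil,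
        Matrix.det_isEmpty (A := triMat [])]
      ring
    · rw [hB, det_glue (u := v) (w := ⟨0, by simp⟩)
        (hC := by intro i j; simp only [hC', Matrix.of_apply, Fin.ext_iff])
        (hD := by intro i j; simp only [hD', Matrix.of_apply, Fin.ext_iff]), adj_tri, tridet_cons, hdA', haA']
      simp only [tridet]
      ring
  rw [← adj_minor, hG]
  rcases rest with _ | ⟨a, r⟩
  · have : IsEmpty (Fin ([] : List R).length) := inferInstanceAs (IsEmpty (Fin 0))
    have hz : C = 0 := by ext i j; exact isEmptyElim i
    rw [hz, Matrix.det_fromBlocks_zero₁₂, hBdet, tridet_single, tridet_nil,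
      Matrix.det_isEmpty (A := triMat [])]
    ring
  · rw [det_glue (u := ⟨0, by simp⟩) (w := Sum.inl v)
      (hC := by intro i j; simp only [hC, Matrix.of_apply, Fin.ext_iff, and_comm])
      (hD := by intro i j; simp only [hD, Matrix.of_apply, Fin.ext_iff, and_comm]), adj_tri, tridet_cons, hBdet, hBadj]
    simp only [tridet]
    ring
end
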